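/- Let p be an odd prime and let χ be a primitive Dirichlet character mod p^n with n ≥ 2. Then there exists b_χ ∈ ℤ with p ∤ b_χ, unique modulo p^{n−1}, such that χ(1 + p z) = e^{2πi·b_χ·L(1+pz)/p^n} for all z ∈ ℤ, where L(1+x) = Σ_{j≥1} (−1)^{j−1} x^j / j is the p-adic logarithm (the series converges p-adically for x ∈ pℤ_p). -/

import Mathlib

open Complex Filter

/-- The defining property of the constant `b_χ` attached to a primitive Dirichlet character
`χ` mod `p^n`: for every `z ∈ ℤ`, if `ℓ ∈ ℚ_p` is the value of the `p`-adic logarithm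
`L(1+pz) = Σ_{j≥1} (−1)^{j−1}(pz)^j/j` and `c ∈ ℤ` is any integer congruent to `b·ℓ`
modulo `p^n` in `ℤ_p`, then `χ(1+pz) = e^{2πi c/p^n}` (i.e. `χ(1+pz) = e^{2πi b L(1+pz)/p^n}`
via the canonical additive character of `ℚ_p/ℤ_p`). -/
def IsLogParam (p n : ℕ) [Fact p.Prime] (χ : DirichletCharacter ℂ (p ^ n)) (b : ℤ) : Prop :=
  ∀ z c : ℤ, ∀ ℓ : ℚ_[p],
    Tendsto (fun N : ℕ => ∑ j ∈ Finset.range N,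
        (-1 : ℚ_[p]) ^ j * ((p : ℚ_[p]) * (z : ℚ_[p])) ^ (j + 1) / ((j : ℚ_[p]) + 1))
      atTop (nhds ℓ) →
    ‖(c : ℚ_[p]) - (b : ℚ_[p]) * ℓ‖ ≤ (p : ℝ) ^ (-(n : ℤ)) →
    χ ((1 + (p : ℤ) * z : ℤ) : ZMod (p ^ n)) =
      Complex.exp (2 * Real.pi * Complex.I * (c : ℂ) / (p : ℂ) ^ n)

/-!
For `‖x - 1‖ < 1` the binomial coefficients `choose (p ^ k - 1) j` tend `p`-adically to `(-1) ^ j`,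
so comparing coefficients gives `log x = lim (x ^ p ^ k - 1) / p ^ k`. This limit turns products
into sums, and lifting the exponent shows that for odd `p` it preserves distances. In particular
`log` carries the powers of `1 + p` to the multiples of `log (1 + p)`, an element of norm `p⁻¹`, so
these powers are dense in `1 + pℤ_p`. A character `χ` on this group is therefore determined by
`χ (1 + p)`, a root of unity of order dividing `p ^ (n - 1)`, which can be matched by a parameter
`b` that is unique modulo `p ^ (n - 1)`. Finally `χ (1 + p * z) = 1` exactly when `p ^ n` divides
`b * (p * z)`; hence `χ` is trivial on `1 + p ^ (n - 1) * ℤ`, i.e. imprimitive, exactly when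
`p ∣ b`.
-/

section PadicNumbers

variable {p : ℕ} [Fact p.Prime]

theorem norm_inv_natCast_le (n : ℕ) : ‖(n : ℚ_[p])⁻¹‖ ≤ n := by
  rcases eq_or_ne n 0 with rfl | hn
  · simp
  rw [norm_inv, Padic.norm_eq_zpow_neg_valuation (Nat.cast_ne_zero.2 hn), Padic.valuation_natCast,
    zpow_neg, inv_inv, zpow_natCast]
  exact_mod_cast Nat.le_of_dvd (Nat.pos_of_ne_zero hn) pow_padicValNat_dvd

theorem exists_natCast_norm_sub_le {x : ℚ_[p]} (hx : ‖x‖ ≤ 1) (n : ℕ) :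
    ∃ m : ℕ, ‖(m : ℚ_[p]) - x‖ ≤ (p : ℝ) ^ (-(n : ℤ)) := by
  have hpos : (0 : ℝ) < (p : ℝ) ^ (-(n : ℤ)) :=
    zpow_pos (Nat.cast_pos.2 (Fact.out : p.Prime).pos) _
  obtain ⟨x, rfl⟩ : ∃ y : ℤ_[p], (y : ℚ_[p]) = x := ⟨⟨x, hx⟩, rfl⟩
  obtain ⟨m, hm⟩ := PadicInt.denseRange_natCast.exists_dist_lt x hpos
  refine ⟨m, ?_⟩
  rw [dist_comm, dist_eq_norm, PadicInt.norm_def] at hm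
  exact_mod_cast hm.le

theorem intCast_zmod_prime_pow_eq_iff {a b : ℤ} {n : ℕ} :
    (a : ZMod (p ^ n)) = b ↔ ‖(a : ℚ_[p]) - b‖ ≤ (p : ℝ) ^ (-(n : ℤ)) := by
  rw [eq_comm, ZMod.intCast_eq_intCast_iff_dvd_sub, Nat.cast_pow, ← Padic.norm_int_le_pow_iff_dvd,
    Int.cast_sub]

theorem norm_eq_one_of_norm_sub_one_lt {x : ℚ_[p]} (hx : ‖x - 1‖ < 1) : ‖x‖ = 1 := by
  have h : ‖x + -1‖ < max ‖x‖ ‖(-1 : ℚ_[p])‖ :=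
    lt_max_of_lt_right (by rwa [← sub_eq_add_neg, norm_neg, norm_one])
  rw [IsUltrametricDist.norm_eq_of_add_norm_lt_max h, norm_neg, norm_one]

theorem norm_mul_sub_one_lt {x y : ℚ_[p]} (hx : ‖x - 1‖ < 1) (hy : ‖y - 1‖ < 1) :
    ‖x * y - 1‖ < 1 := by
  rw [show x * y - 1 = (x - 1) * y + (y - 1) by ring]
  refine (IsUltrametricDist.norm_add_le_max _ _).trans_lt (max_lt ?_ hy)
  rwa [norm_mul, norm_eq_one_of_norm_sub_one_lt hy, mul_one]

theorem norm_pow_sub_one_lt {x : ℚ_[p]} (hx : ‖x - 1‖ < 1) (m : ℕ) : ‖x ^ m - 1‖ < 1 := by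
  induction m with
  | zero => simp
  | succ m ih => exact pow_succ x m ▸ norm_mul_sub_one_lt ih hx

theorem norm_one_add_prime_sub_one_lt : ‖(1 + p : ℚ_[p]) - 1‖ < 1 := by
  simpa using Padic.norm_p_lt_one (p := p)

theorem norm_intCast_mul_le (a : ℤ) (x : ℚ_[p]) : ‖a * x‖ ≤ ‖x‖ := by
  rw [norm_mul]
  exact mul_le_of_le_one_left (norm_nonneg x) (Padic.norm_int_le_one a)

theorem norm_one_add_prime_mul_sub_one_lt (z : ℤ) : ‖(1 + p * z : ℚ_[p]) - 1‖ < 1 := by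
  rw [add_sub_cancel_left, norm_mul]
  exact mul_lt_one_of_nonneg_of_lt_one_left (norm_nonneg _) Padic.norm_p_lt_one
    (Padic.norm_int_le_one z)

end PadicNumbers

section LiftingTheExponent

variable {p : ℕ} [Fact p.Prime]

theorem norm_geom_sum₂_prime (hodd : p ≠ 2) {x y : ℤ_[p]} (hxy : (p : ℤ_[p]) ∣ x - y)
    (hx : ¬ (p : ℤ_[p]) ∣ x) :
    ‖∑ i ∈ Finset.range p, x ^ i * y ^ (p - 1 - i)‖ = ‖(p : ℤ_[p])‖ := by
  obtain ⟨⟨u, hu⟩, hsq⟩ := (emultiplicity_eq_coe (n := 1)).1 <|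
    emultiplicity_geom_sum₂_eq_one PadicInt.prime_p ((Fact.out : p.Prime).odd_of_ne_two hodd) hxy hx
  have hpu : ¬ (p : ℤ_[p]) ∣ u := fun h => hsq <| by
    rw [hu, pow_succ]
    exact mul_dvd_mul_left _ h
  have hunit : ‖u‖ = 1 :=
    (PadicInt.norm_le_one u).eq_of_not_lt (mt (PadicInt.norm_lt_one_iff_dvd u).1 hpu)
  rw [hu, norm_mul, hunit, mul_one, pow_one]

theorem norm_pow_prime_pow_sub_pow_prime_pow (hodd : p ≠ 2) {x y : ℤ_[p]}
    (hxy : (p : ℤ_[p]) ∣ x - y) (hx : ¬ (p : ℤ_[p]) ∣ x) (k : ℕ) :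
    ‖x ^ p ^ k - y ^ p ^ k‖ = ‖(p : ℤ_[p])‖ ^ k * ‖x - y‖ := by
  induction k with
  | zero => simp
  | succ k ih =>
    have hxy' : (p : ℤ_[p]) ∣ x ^ p ^ k - y ^ p ^ k := hxy.trans (sub_dvd_pow_sub_pow x y _)
    have hx' : ¬ (p : ℤ_[p]) ∣ x ^ p ^ k := mt PadicInt.prime_p.dvd_of_dvd_pow hx
    rw [pow_succ p, pow_mul, pow_mul, ← geom_sum₂_mul, norm_mul,
      norm_geom_sum₂_prime hodd hxy' hx', ih, pow_succ', mul_assoc]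

theorem norm_pow_prime_pow_sub_of_norm_sub_one_lt (hodd : p ≠ 2) {x y : ℚ_[p]} (hx : ‖x - 1‖ < 1)
    (hy : ‖y - 1‖ < 1) (k : ℕ) :
    ‖x ^ p ^ k - y ^ p ^ k‖ = ‖((p ^ k : ℕ) : ℚ_[p])‖ * ‖x - y‖ := by
  have hx1 := norm_eq_one_of_norm_sub_one_lt hx
  have hxy : ‖x - y‖ < 1 := by
    rw [← sub_sub_sub_cancel_right x y 1, sub_eq_add_neg]
    exact (IsUltrametricDist.norm_add_le_max _ _).trans_lt (max_lt hx (by rwa [norm_neg]))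
  obtain ⟨x, rfl⟩ : ∃ x' : ℤ_[p], (x' : ℚ_[p]) = x := ⟨⟨x, hx1.le⟩, rfl⟩
  obtain ⟨y, rfl⟩ : ∃ y' : ℤ_[p], (y' : ℚ_[p]) = y :=
    ⟨⟨y, (norm_eq_one_of_norm_sub_one_lt hy).le⟩, rfl⟩
  have hdvd : (p : ℤ_[p]) ∣ x - y := (PadicInt.norm_lt_one_iff_dvd _).1 (mod_cast hxy)
  have hndvd : ¬ (p : ℤ_[p]) ∣ x :=
    mt (PadicInt.norm_lt_one_iff_dvd _).2 (not_lt.2 (by rw [PadicInt.norm_def, hx1]))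
  have h := norm_pow_prime_pow_sub_pow_prime_pow hodd hdvd hndvd k
  rw [← norm_pow] at h
  exact_mod_cast h

end LiftingTheExponent

section PadicLog

variable {p : ℕ} [Fact p.Prime]

/-- The `p`-adic logarithm, as the sum of its power series about `1`. The series converges exactly
for `‖x - 1‖ < 1`; elsewhere the value is the junk value `0` of a divergent `tsum`. -/
noncomputable def padicLog (x : ℚ_[p]) : ℚ_[p] :=
  ∑' j : ℕ, (-1) ^ j * (x - 1) ^ (j + 1) / (j + 1)

theorem norm_mul_pow_succ_div_le {c : ℚ_[p]} (hc : ‖c‖ ≤ 1) (y : ℚ_[p]) (j : ℕ) :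
    ‖c * y ^ (j + 1) / (j + 1)‖ ≤ (j + 1 : ℕ) * ‖y‖ ^ (j + 1) := by
  have hinv : ‖((j : ℚ_[p]) + 1)⁻¹‖ ≤ (j + 1 : ℕ) := by
    simpa only [Nat.cast_succ] using norm_inv_natCast_le (p := p) (j + 1)
  calc ‖c * y ^ (j + 1) / (j + 1)‖ = ‖c‖ * ‖y‖ ^ (j + 1) * ‖((j : ℚ_[p]) + 1)⁻¹‖ := by
        rw [div_eq_mul_inv, norm_mul, norm_mul, norm_pow]
    _ ≤ 1 * ‖y‖ ^ (j + 1) * (j + 1 : ℕ) := by gcongr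
    _ = (j + 1 : ℕ) * ‖y‖ ^ (j + 1) := by ring

theorem summable_succ_mul_pow_succ {r : ℝ} (hr : ‖r‖ < 1) :
    Summable fun j : ℕ => ((j + 1 : ℕ) : ℝ) * r ^ (j + 1) := by
  have h : Summable fun j : ℕ => (j : ℝ) ^ 1 * r ^ j :=
    summable_pow_mul_geometric_of_norm_lt_one 1 hr
  simpa only [pow_one] using (summable_nat_add_iff 1).2 h

theorem hasSum_padicLog {x : ℚ_[p]} (hx : ‖x - 1‖ < 1) :
    HasSum (fun j : ℕ => (-1 : ℚ_[p]) ^ j * (x - 1) ^ (j + 1) / (j + 1)) (padicLog x) :=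
  (Summable.of_norm_bounded (summable_succ_mul_pow_succ (by rwa [norm_norm]))
    fun j => norm_mul_pow_succ_div_le (by simp) (x - 1) j).hasSum

theorem tendsto_choose_prime_pow_sub_one (j : ℕ) :
    Tendsto (fun k : ℕ => ((p ^ k - 1).choose j : ℚ_[p])) atTop (nhds ((-1) ^ j)) := by
  have hpow : Tendsto (fun k : ℕ => ((p ^ k - 1 : ℕ) : ℤ_[p])) atTop (nhds (-1)) := by
    have h := (tendsto_pow_atTop_nhds_zero_of_norm_lt_one
      ((PadicInt.norm_lt_one_iff_dvd (p : ℤ_[p])).2 dvd_rfl)).sub_const 1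
    simpa [Nat.cast_sub (Nat.one_le_pow _ _ (Fact.out : p.Prime).pos)] using h
  have hneg : Ring.choose (-1 : ℤ_[p]) j = (-1) ^ j := by
    simp [Ring.choose_neg', Int.negOnePow, Units.smul_def]
  have h := ((PadicInt.continuous_choose j).tendsto (-1)).comp hpow
  rw [hneg] at h
  have hcoe := (continuous_subtype_val.tendsto ((-1 : ℤ_[p]) ^ j)).comp h
  simp only [Function.comp_def, Ring.choose_natCast] at hcoe
  exact_mod_cast hcoe

theorem sum_choose_mul_pow_succ_div {K : Type*} [Field K] [CharZero K] (y : K) {q : ℕ}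
    (hq : q ≠ 0) :
    ∑ j ∈ Finset.range q, ((q - 1).choose j : K) * y ^ (j + 1) / (j + 1) =
      ((1 + y) ^ q - 1) / q := by
  obtain ⟨r, rfl⟩ := Nat.exists_eq_succ_of_ne_zero hq
  rw [eq_div_iff (Nat.cast_ne_zero.2 hq), add_comm 1 y, add_pow, Finset.sum_range_succ' _ r.succ,
    Finset.sum_mul]
  simp only [one_pow, mul_one, pow_zero, Nat.choose_zero_right, Nat.cast_one, add_sub_cancel_right]
  refine Finset.sum_congr rfl fun j _ => ?_
  have hchoose : ((r + 1 : ℕ) : K) * (r.choose j : K) = ((r + 1).choose (j + 1) : K) * (j + 1) := by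
    exact_mod_cast Nat.add_one_mul_choose_eq r j
  have hj : (j + 1 : K) ≠ 0 := Nat.cast_add_one_ne_zero j
  rw [Nat.succ_sub_one, div_mul_eq_mul_div, div_eq_iff hj]
  linear_combination y ^ (j + 1) * hchoose

theorem tendsto_pow_prime_pow_sub_one_div {x : ℚ_[p]} (hx : ‖x - 1‖ < 1) :
    Tendsto (fun k : ℕ => (x ^ p ^ k - 1) / ((p ^ k : ℕ) : ℚ_[p])) atTop (nhds (padicLog x)) := by
  have hterms := tendsto_tsum_of_dominated_convergence (𝓕 := atTop)
    (f := fun k j : ℕ => ((p ^ k - 1).choose j : ℚ_[p]) * (x - 1) ^ (j + 1) / (j + 1))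
    (summable_succ_mul_pow_succ (by rwa [norm_norm]))
    (fun j => ((tendsto_choose_prime_pow_sub_one j).mul_const _).div_const _)
    (Eventually.of_forall fun k j =>
      norm_mul_pow_succ_div_le (mod_cast Padic.norm_int_le_one ((p ^ k - 1).choose j)) (x - 1) j)
  refine hterms.congr fun k => ?_
  have hq : p ^ k ≠ 0 := pow_ne_zero k (Fact.out : p.Prime).ne_zero
  rw [tsum_eq_sum (s := Finset.range (p ^ k)), sum_choose_mul_pow_succ_div _ hq, add_sub_cancel]
  intro j hj
  have hlt : p ^ k - 1 < j := by have := Finset.mem_range.not.1 hj; lia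
  rw [Nat.choose_eq_zero_of_lt hlt, Nat.cast_zero, zero_mul, zero_div]

theorem padicLog_one : padicLog (1 : ℚ_[p]) = 0 := by
  simp [padicLog]

theorem padicLog_mul {x y : ℚ_[p]} (hx : ‖x - 1‖ < 1) (hy : ‖y - 1‖ < 1) :
    padicLog (x * y) = padicLog x + padicLog y := by
  have hypow : Tendsto (fun k : ℕ => y ^ p ^ k) atTop (nhds 1) := by
    have hq : Tendsto (fun k : ℕ => ((p ^ k : ℕ) : ℚ_[p])) atTop (nhds 0) := by
      simpa using tendsto_pow_atTop_nhds_zero_of_norm_lt_one (Padic.norm_p_lt_one (p := p))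
    have h := ((tendsto_pow_prime_pow_sub_one_div hy).mul hq).add_const 1
    rw [mul_zero, zero_add] at h
    refine h.congr fun k => ?_
    rw [div_mul_cancel₀ _ (Nat.cast_ne_zero.2 (pow_ne_zero k (Fact.out : p.Prime).ne_zero)),
      sub_add_cancel]
  have h := ((tendsto_pow_prime_pow_sub_one_div hx).mul hypow).add
    (tendsto_pow_prime_pow_sub_one_div hy)
  rw [mul_one] at h
  refine tendsto_nhds_unique (tendsto_pow_prime_pow_sub_one_div (norm_mul_sub_one_lt hx hy))
    (h.congr fun k => ?_)
  rw [mul_pow]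
  ring

theorem padicLog_pow {x : ℚ_[p]} (hx : ‖x - 1‖ < 1) (m : ℕ) :
    padicLog (x ^ m) = m * padicLog x := by
  induction m with
  | zero => simp [padicLog_one]
  | succ m ih =>
    rw [pow_succ, padicLog_mul (norm_pow_sub_one_lt hx m) hx, ih, Nat.cast_succ, add_one_mul]

theorem norm_padicLog_sub_padicLog (hodd : p ≠ 2) {x y : ℚ_[p]} (hx : ‖x - 1‖ < 1)
    (hy : ‖y - 1‖ < 1) : ‖padicLog x - padicLog y‖ = ‖x - y‖ := by
  refine tendsto_nhds_unique ((tendsto_pow_prime_pow_sub_one_div hx).sub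
    (tendsto_pow_prime_pow_sub_one_div hy)).norm (tendsto_const_nhds.congr fun k => ?_)
  have hq : ‖((p ^ k : ℕ) : ℚ_[p])‖ ≠ 0 :=
    norm_ne_zero_iff.2 (Nat.cast_ne_zero.2 (pow_ne_zero k (Fact.out : p.Prime).ne_zero))
  rw [← sub_div, sub_sub_sub_cancel_right, norm_div,
    norm_pow_prime_pow_sub_of_norm_sub_one_lt hodd hx hy, mul_div_cancel_left₀ _ hq]

theorem norm_padicLog (hodd : p ≠ 2) {x : ℚ_[p]} (hx : ‖x - 1‖ < 1) : ‖padicLog x‖ = ‖x - 1‖ := by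
  simpa [padicLog_one] using norm_padicLog_sub_padicLog hodd hx (y := 1) (by simp)

theorem norm_padicLog_one_add_prime (hodd : p ≠ 2) :
    ‖padicLog (1 + p : ℚ_[p])‖ = (p : ℝ)⁻¹ := by
  rw [norm_padicLog hodd norm_one_add_prime_sub_one_lt, add_sub_cancel_left, Padic.norm_p]

theorem norm_padicLog_lt_one (hodd : p ≠ 2) {x : ℚ_[p]} (hx : ‖x - 1‖ < 1) : ‖padicLog x‖ < 1 :=
  (norm_padicLog hodd hx).trans_lt hx

theorem padicLog_one_add_prime_ne_zero (hodd : p ≠ 2) : padicLog (1 + p : ℚ_[p]) ≠ 0 := by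
  rw [← norm_ne_zero_iff, norm_padicLog_one_add_prime hodd]
  exact inv_ne_zero (Nat.cast_ne_zero.2 (Fact.out : p.Prime).ne_zero)

theorem norm_div_padicLog_one_add_prime_le_one (hodd : p ≠ 2) {y : ℚ_[p]} (hy : ‖y‖ < 1) :
    ‖y / padicLog (1 + p)‖ ≤ 1 := by
  have hp : (0 : ℝ) < p := Nat.cast_pos.2 (Fact.out : p.Prime).pos
  have hy' : ‖y‖ ≤ (p : ℝ)⁻¹ := by
    rw [← zpow_neg_one]
    exact (Padic.norm_le_pow_iff_norm_lt_pow_add_one y (-1)).2 (by simpa using hy)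
  rw [norm_div, norm_padicLog_one_add_prime hodd]
  exact div_le_one_of_le₀ hy' (inv_nonneg.2 hp.le)

theorem exists_natCast_norm_mul_padicLog_sub_le (hodd : p ≠ 2) {y : ℚ_[p]} (hy : ‖y‖ < 1) (n : ℕ) :
    ∃ m : ℕ, ‖m * padicLog (1 + p : ℚ_[p]) - y‖ ≤ (p : ℝ) ^ (-(n : ℤ)) := by
  obtain ⟨m, hm⟩ := exists_natCast_norm_sub_le (norm_div_padicLog_one_add_prime_le_one hodd hy) n
  have hL : ‖padicLog (1 + p : ℚ_[p])‖ ≤ 1 :=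
    (norm_padicLog_lt_one hodd norm_one_add_prime_sub_one_lt).le
  refine ⟨m, ?_⟩
  calc ‖m * padicLog (1 + p : ℚ_[p]) - y‖
      = ‖(m : ℚ_[p]) - y / padicLog (1 + p)‖ * ‖padicLog (1 + p : ℚ_[p])‖ := by
        rw [← norm_mul, sub_mul, div_mul_cancel₀ _ (padicLog_one_add_prime_ne_zero hodd)]
    _ ≤ ‖(m : ℚ_[p]) - y / padicLog (1 + p)‖ := mul_le_of_le_one_right (norm_nonneg _) hL
    _ ≤ (p : ℝ) ^ (-(n : ℤ)) := hm

theorem exists_norm_sub_one_add_prime_pow_le (hodd : p ≠ 2) {x : ℚ_[p]} (hx : ‖x - 1‖ < 1)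
    (n : ℕ) : ∃ m : ℕ, ‖x - (1 + p) ^ m‖ ≤ (p : ℝ) ^ (-(n : ℤ)) := by
  obtain ⟨m, hm⟩ :=
    exists_natCast_norm_mul_padicLog_sub_le hodd (norm_padicLog_lt_one hodd hx) n
  refine ⟨m, ?_⟩
  rwa [← norm_padicLog_sub_padicLog hodd hx (norm_pow_sub_one_lt norm_one_add_prime_sub_one_lt m),
    padicLog_pow norm_one_add_prime_sub_one_lt, norm_sub_rev]

end PadicLog

section Conductor

variable {R : Type*} [CommMonoidWithZero R]

theorem factorsThrough_iff_forall_intCast {N d : ℕ} [NeZero N] (hd : d ∣ N)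
    {χ : DirichletCharacter R N} :
    χ.FactorsThrough d ↔ ∀ a : ℤ, IsUnit (a : ZMod N) → (a : ZMod d) = 1 → χ a = 1 := by
  have hker (u : (ZMod N)ˣ) :
      u ∈ (ZMod.unitsMap hd).ker ↔ ZMod.castHom hd (ZMod d) (u : ZMod N) = 1 := by
    rw [MonoidHom.mem_ker, Units.ext_iff, ZMod.unitsMap_def, Units.coe_map, Units.val_one]
    rfl
  have hker' (u : (ZMod N)ˣ) : u ∈ χ.toUnitHom.ker ↔ χ u = 1 := by
    rw [MonoidHom.mem_ker, Units.ext_iff, MulChar.coe_toUnitHom, Units.val_one]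
  rw [χ.factorsThrough_iff_ker_unitsMap hd]
  constructor
  · intro h a ha had
    exact (hker' ha.unit).1 (h ((hker ha.unit).2 (by rwa [IsUnit.unit_spec, map_intCast])))
  · intro h u hu
    obtain ⟨a, ha⟩ := ZMod.intCast_surjective (u : ZMod N)
    rw [hker, ← ha, map_intCast] at hu
    rw [hker', ← ha]
    exact h a (ha ▸ u.isUnit) hu

theorem factorsThrough_pow_pred_iff {q n : ℕ} [NeZero q] (hn : 2 ≤ n)
    {χ : DirichletCharacter R (q ^ n)} :
    χ.FactorsThrough (q ^ (n - 1)) ↔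
      ∀ t : ℤ, χ ((1 + q ^ (n - 1) * t : ℤ) : ZMod (q ^ n)) = 1 := by
  have hdvd : q ^ (n - 1) ∣ q ^ n := pow_dvd_pow q (Nat.sub_le n 1)
  rw [factorsThrough_iff_forall_intCast hdvd]
  constructor
  · intro h t
    refine h _ ?_ ?_
    · rw [ZMod.coe_int_isUnit_iff_isCoprime]
      have hcop : IsCoprime (q : ℤ) (1 + q ^ (n - 1) * t) := by
        refine ⟨-(q ^ (n - 2) * t), 1, ?_⟩
        rw [show n - 1 = n - 2 + 1 by lia]
        ring
      exact_mod_cast hcop.pow_left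
    · rw [← Nat.cast_pow, Int.cast_add, Int.cast_mul, Int.cast_natCast, ZMod.natCast_self, zero_mul,
        Int.cast_one, add_zero]
  · intro h a _ ha
    obtain ⟨t, ht⟩ := (ZMod.intCast_eq_intCast_iff_dvd_sub 1 a _).1 (by simpa using ha.symm)
    rw [← h t, ← Nat.cast_pow, ← ht, add_sub_cancel]

theorem conductor_eq_prime_pow_iff {p n : ℕ} [Fact p.Prime] (hn : n ≠ 0)
    {χ : DirichletCharacter R (p ^ n)} :
    χ.conductor = p ^ n ↔ ¬ χ.FactorsThrough (p ^ (n - 1)) := by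
  have hp : p.Prime := Fact.out
  rw [← χ.mem_conductorSet_iff,
    χ.mem_conductorSet_iff_conductor_dvd (pow_dvd_pow p (Nat.sub_le n 1))]
  obtain ⟨k, hk, hχ⟩ := (Nat.dvd_prime_pow hp).1 χ.conductor_dvd_level
  rw [hχ, Nat.pow_dvd_pow_iff_le_right hp.one_lt, Nat.pow_right_inj hp.one_lt]
  lia

end Conductor

section LogParam

variable {p n : ℕ} [Fact p.Prime]

theorem isLogParam_iff {χ : DirichletCharacter ℂ (p ^ n)} {b : ℤ} :
    IsLogParam p n χ b ↔ ∀ z c : ℤ,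
      ‖(c : ℚ_[p]) - b * padicLog (1 + p * z : ℚ_[p])‖ ≤ (p : ℝ) ^ (-(n : ℤ)) →
        χ ((1 + p * z : ℤ) : ZMod (p ^ n)) = ZMod.stdAddChar (c : ZMod (p ^ n)) := by
  have hlog (z : ℤ) : Tendsto (fun N : ℕ => ∑ j ∈ Finset.range N,
      (-1 : ℚ_[p]) ^ j * ((p : ℚ_[p]) * (z : ℚ_[p])) ^ (j + 1) / ((j : ℚ_[p]) + 1))
      atTop (nhds (padicLog (1 + p * z : ℚ_[p]))) := by
    simpa only [add_sub_cancel_left] using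
      (hasSum_padicLog (norm_one_add_prime_mul_sub_one_lt z)).tendsto_sum_nat
  simp only [IsLogParam, ZMod.stdAddChar_coe, Nat.cast_pow]
  refine ⟨fun h z c => h z c _ (hlog z), fun h z c ℓ hℓ => ?_⟩
  rw [tendsto_nhds_unique hℓ (hlog z)]
  exact h z c

theorem exists_apply_one_add_prime_eq_stdAddChar (hodd : p ≠ 2) (hn : n ≠ 0)
    (χ : DirichletCharacter ℂ (p ^ n)) :
    ∃ k : ℤ, χ ((1 + p : ℤ) : ZMod (p ^ n)) = ZMod.stdAddChar ((p * k : ℤ) : ZMod (p ^ n)) := by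
  have hp : p.Prime := Fact.out
  obtain ⟨m, rfl⟩ := Nat.exists_eq_succ_of_ne_zero hn
  have hroot : IsPrimitiveRoot (ZMod.stdAddChar (p : ZMod (p ^ (m + 1)))) (p ^ m) := by
    have h := Complex.isPrimitiveRoot_exp (p ^ m) (pow_ne_zero m hp.ne_zero)
    convert h using 1
    have hpC : (p : ℂ) ≠ 0 := Nat.cast_ne_zero.2 hp.ne_zero
    rw [← Int.cast_natCast p, ZMod.stdAddChar_coe]
    congr 1
    push_cast
    field_simp
    ring
  have hpow : χ ((1 + p : ℤ) : ZMod (p ^ (m + 1))) ^ p ^ m = 1 := by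
    rw [← map_pow, ← ZMod.orderOf_one_add_prime hp hodd m, Int.cast_add, Int.cast_one,
      Int.cast_natCast, pow_orderOf_eq_one, map_one]
  obtain ⟨k, -, hk⟩ := hroot.eq_pow_of_pow_eq_one hpow
  refine ⟨k, ?_⟩
  rw [← hk, ← AddChar.map_nsmul_eq_pow, nsmul_eq_mul, mul_comm (p : ℤ)]
  push_cast
  rfl

theorem isLogParam_of_apply_one_add_prime_eq_stdAddChar (hodd : p ≠ 2)
    {χ : DirichletCharacter ℂ (p ^ n)} {a b : ℤ}
    (hχ : χ ((1 + p : ℤ) : ZMod (p ^ n)) = ZMod.stdAddChar (a : ZMod (p ^ n)))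
    (hab : ‖(a : ℚ_[p]) - b * padicLog (1 + p : ℚ_[p])‖ ≤ (p : ℝ) ^ (-(n : ℤ))) :
    IsLogParam p n χ b := by
  refine isLogParam_iff.2 fun z c hc => ?_
  set L := padicLog (1 + p : ℚ_[p])
  set ℓ := padicLog (1 + p * z : ℚ_[p])
  have hz := norm_one_add_prime_mul_sub_one_lt (p := p) z
  obtain ⟨m, hm⟩ := exists_norm_sub_one_add_prime_pow_le hodd hz n
  have hlog : ‖ℓ - m * L‖ ≤ (p : ℝ) ^ (-(n : ℤ)) := by
    rwa [← padicLog_pow norm_one_add_prime_sub_one_lt,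
      norm_padicLog_sub_padicLog hodd hz (norm_pow_sub_one_lt norm_one_add_prime_sub_one_lt m)]
  have hunit : ((1 + p * z : ℤ) : ZMod (p ^ n)) = ((1 + p) ^ m : ℤ) :=
    intCast_zmod_prime_pow_eq_iff.2 (mod_cast hm)
  have hexp : (c : ZMod (p ^ n)) = (m * a : ℤ) := by
    refine intCast_zmod_prime_pow_eq_iff.2 ?_
    have hsplit : (c : ℚ_[p]) - (m * a : ℤ) =
        (c - b * ℓ) + ((b : ℤ) * (ℓ - m * L) + ((-m : ℤ) : ℚ_[p]) * (a - b * L)) := by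
      push_cast
      ring
    rw [hsplit]
    refine (IsUltrametricDist.norm_add_le_max _ _).trans (max_le hc ?_)
    exact (IsUltrametricDist.norm_add_le_max _ _).trans (max_le
      ((norm_intCast_mul_le b _).trans hlog) ((norm_intCast_mul_le (-m) _).trans hab))
  rw [hunit, Int.cast_pow, map_pow, hχ, hexp, Int.cast_mul, Int.cast_natCast, ← nsmul_eq_mul,
    AddChar.map_nsmul_eq_pow]

theorem exists_isLogParam (hodd : p ≠ 2) (hn : n ≠ 0) (χ : DirichletCharacter ℂ (p ^ n)) :
    ∃ b : ℤ, IsLogParam p n χ b := by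
  obtain ⟨k, hk⟩ := exists_apply_one_add_prime_eq_stdAddChar hodd hn χ
  have hpk : ‖((p * k : ℤ) : ℚ_[p])‖ < 1 := Padic.norm_intCast_lt_one_iff.2 (dvd_mul_right _ k)
  obtain ⟨b, hb⟩ := exists_natCast_norm_mul_padicLog_sub_le hodd hpk n
  exact ⟨b, isLogParam_of_apply_one_add_prime_eq_stdAddChar hodd hk (by rwa [norm_sub_rev])⟩

theorem IsLogParam.exists_apply_eq_stdAddChar (hodd : p ≠ 2) {χ : DirichletCharacter ℂ (p ^ n)}
    {b : ℤ} (hb : IsLogParam p n χ b) (z : ℤ) :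
    ∃ c : ℤ, ‖(c : ℚ_[p]) - b * padicLog (1 + p * z : ℚ_[p])‖ ≤ (p : ℝ) ^ (-(n : ℤ)) ∧
      χ ((1 + p * z : ℤ) : ZMod (p ^ n)) = ZMod.stdAddChar (c : ZMod (p ^ n)) := by
  have hint : ‖b * padicLog (1 + p * z : ℚ_[p])‖ ≤ 1 := (norm_intCast_mul_le b _).trans
    (norm_padicLog_lt_one hodd (norm_one_add_prime_mul_sub_one_lt z)).le
  obtain ⟨c, hc⟩ := exists_natCast_norm_sub_le hint n
  exact ⟨c, mod_cast hc, isLogParam_iff.1 hb z c (mod_cast hc)⟩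

theorem IsLogParam.modEq (hodd : p ≠ 2) (hn : n ≠ 0) {χ : DirichletCharacter ℂ (p ^ n)} {b b' : ℤ}
    (hb : IsLogParam p n χ b) (hb' : IsLogParam p n χ b') :
    b ≡ b' [ZMOD (p : ℤ) ^ (n - 1)] := by
  set L := padicLog (1 + p : ℚ_[p])
  have hp : (0 : ℝ) < p := Nat.cast_pos.2 (Fact.out : p.Prime).pos
  obtain ⟨c, hc, hχ⟩ := hb.exists_apply_eq_stdAddChar hodd 1
  obtain ⟨c', hc', hχ'⟩ := hb'.exists_apply_eq_stdAddChar hodd 1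
  rw [Int.cast_one, mul_one] at hc hc'
  have hcc' : ‖(c : ℚ_[p]) - c'‖ ≤ (p : ℝ) ^ (-(n : ℤ)) :=
    intCast_zmod_prime_pow_eq_iff.1 (ZMod.injective_stdAddChar (hχ.symm.trans hχ'))
  have hmul : ‖((b' - b : ℤ) : ℚ_[p]) * L‖ ≤ (p : ℝ) ^ (-(n : ℤ)) := by
    rw [show ((b' - b : ℤ) : ℚ_[p]) * L = (c - b * L) + (-(c' - b' * L) + -(c - c')) by
      push_cast
      ring]
    refine (IsUltrametricDist.norm_add_le_max _ _).trans (max_le hc ?_)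
    refine (IsUltrametricDist.norm_add_le_max _ _).trans (max_le ?_ ?_) <;> rwa [norm_neg]
  rw [norm_mul, norm_padicLog_one_add_prime hodd, ← div_eq_mul_inv, div_le_iff₀ hp,
    ← zpow_add_one₀ hp.ne'] at hmul
  rwa [Int.modEq_iff_dvd, ← Padic.norm_int_le_pow_iff_dvd, Nat.cast_pred (Nat.pos_of_ne_zero hn),
    neg_sub', sub_neg_eq_add]

theorem IsLogParam.apply_one_add_prime_mul_eq_one_iff (hodd : p ≠ 2)
    {χ : DirichletCharacter ℂ (p ^ n)} {b : ℤ} (hb : IsLogParam p n χ b) (z : ℤ) :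
    χ ((1 + p * z : ℤ) : ZMod (p ^ n)) = 1 ↔ (p : ℤ) ^ n ∣ b * (p * z) := by
  obtain ⟨c, hc, hχ⟩ := hb.exists_apply_eq_stdAddChar hodd z
  have hz := norm_one_add_prime_mul_sub_one_lt (p := p) z
  have hnorm : ‖((b * (p * z) : ℤ) : ℚ_[p])‖ = ‖b * padicLog (1 + p * z : ℚ_[p])‖ := by
    rw [norm_mul, norm_padicLog hodd hz, add_sub_cancel_left, ← norm_mul]
    push_cast
    rfl
  rw [hχ, ← AddChar.map_zero_eq_one (ZMod.stdAddChar (N := p ^ n)),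
    ZMod.injective_stdAddChar.eq_iff, ← Int.cast_zero, intCast_zmod_prime_pow_eq_iff,
    ← Padic.norm_int_le_pow_iff_dvd, hnorm, Int.cast_zero, sub_zero]
  constructor <;> intro h
  · rw [← sub_sub_cancel (c : ℚ_[p]) (b * _), sub_eq_add_neg]
    exact (IsUltrametricDist.norm_add_le_max _ _).trans (max_le h (by rwa [norm_neg]))
  · rw [← sub_add_cancel (c : ℚ_[p]) (b * padicLog (1 + p * z : ℚ_[p]))]
    exact (IsUltrametricDist.norm_add_le_max _ _).trans (max_le hc h)

theorem IsLogParam.prime_dvd_iff_factorsThrough (hodd : p ≠ 2) (hn : 2 ≤ n)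
    {χ : DirichletCharacter ℂ (p ^ n)} {b : ℤ} (hb : IsLogParam p n χ b) :
    (p : ℤ) ∣ b ↔ χ.FactorsThrough (p ^ (n - 1)) := by
  have hp : (p : ℤ) ≠ 0 := Nat.cast_ne_zero.2 (Fact.out : p.Prime).ne_zero
  obtain ⟨m, rfl⟩ := Nat.exists_eq_add_of_le' hn
  have happly (t : ℤ) :
      χ ((1 + p ^ (m + 1) * t : ℤ) : ZMod (p ^ (m + 2))) = 1 ↔ (p : ℤ) ∣ b * t := by
    rw [show 1 + (p : ℤ) ^ (m + 1) * t = 1 + p * (p ^ m * t) by ring,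
      hb.apply_one_add_prime_mul_eq_one_iff hodd,
      show b * ((p : ℤ) * (p ^ m * t)) = p ^ (m + 1) * (b * t) by ring, pow_succ _ (m + 1),
      mul_dvd_mul_iff_left (pow_ne_zero _ hp)]
  rw [factorsThrough_pow_pred_iff hn]
  refine ⟨fun h t => (happly t).2 (h.mul_right t), fun h => ?_⟩
  simpa using (happly 1).1 (h 1)

end LogParam

theorem stmt7_general (p n : ℕ) [Fact p.Prime] (hodd : p ≠ 2) (hn : 2 ≤ n)
    (χ : DirichletCharacter ℂ (p ^ n)) :
    ∃ b : ℤ, IsLogParam p n χ b ∧ (¬ (p : ℤ) ∣ b ↔ χ.conductor = p ^ n) ∧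
      ∀ b' : ℤ, IsLogParam p n χ b' → Int.ModEq ((p : ℤ) ^ (n - 1)) b b' := by
  have hn0 : n ≠ 0 := by lia
  obtain ⟨b, hb⟩ := exists_isLogParam hodd hn0 χ
  refine ⟨b, hb, ?_, fun b' hb' => hb.modEq hodd hn0 hb'⟩
  rw [conductor_eq_prime_pow_iff hn0, hb.prime_dvd_iff_factorsThrough hodd hn]

/-- for `p` an odd prime and `χ` a primitive Dirichlet character mod `p^n`,
`n ≥ 2`, there is `b_χ ∈ ℤ` with `p ∤ b_χ`, unique modulo `p^{n−1}`, such that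
`χ(1+pz) = e^{2πi b_χ L(1+pz)/p^n}` for all `z ∈ ℤ`, where `L` is the `p`-adic logarithm. -/
theorem stmt7 (p n : ℕ) [Fact p.Prime] (hodd : p ≠ 2) (hn : 2 ≤ n)
    (χ : DirichletCharacter ℂ (p ^ n)) (hχ : χ.conductor = p ^ n) :
    ∃ b : ℤ, ¬ (p : ℤ) ∣ b ∧ IsLogParam p n χ b ∧
      ∀ b' : ℤ, ¬ (p : ℤ) ∣ b' → IsLogParam p n χ b' →
        Int.ModEq ((p : ℤ) ^ (n - 1)) b b' := by
  obtain ⟨b, hb, hprim, huniq⟩ := stmt7_general p n hodd hn χ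
  exact ⟨b, hprim.2 hχ, hb, fun b' _ => huniq b'⟩
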